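/- If f, g : M → N are smooth maps between smooth manifolds that are homotopic (through a continuous homotopy), then they are smoothly homotopic; if the homotopy is relative to a closed subset A ⊂ M, a smooth homotopy relative to A exists. -/

import Mathlib

/- Framework: embedded submanifolds of Euclidean space (Guillemin–Pollack style),
tangent spaces via velocity vectors of curves, local-straightening charts. -/

noncomputable section
open Set Function
open scoped RealInnerProductSpace

abbrev Euc (n : ℕ) : Type := EuclideanSpace ℝ (Fin n)

/-- Velocity vectors at `x` of smooth curves through `x` contained in `S`. -/
def tangentSet {E : Type*} [NormedAddCommGroup E] [NormedSpace ℝ E] (S : Set E) (x : E) : Set E :=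
  {v | ∃ γ : ℝ → E, (∀ t, γ t ∈ S) ∧ γ 0 = x ∧ HasDerivAt γ v 0}

/-- The tangent space of a subset `S` at `x`, as a linear subspace of the ambient space. -/
def tangentSpaceOf {E : Type*} [NormedAddCommGroup E] [NormedSpace ℝ E] (S : Set E) (x : E) :
    Submodule ℝ E := Submodule.span ℝ (tangentSet S x)

/-- `S` is a smooth embedded `k`-dimensional submanifold (without boundary):
around every point there is a smooth local straightening diffeomorphism carrying `S`
onto a `k`-dimensional linear subspace. -/
def IsSubmanifoldOfDim {E : Type*} [NormedAddCommGroup E] [NormedSpace ℝ E]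
    (k : ℕ) (S : Set E) : Prop :=
  ∀ x ∈ S, ∃ (U V : Set E) (φ ψ : E → E) (K : Submodule ℝ E),
    Module.finrank ℝ K = k ∧ IsOpen U ∧ IsOpen V ∧ x ∈ U ∧
    ContDiffOn ℝ (⊤ : ℕ∞) φ U ∧ ContDiffOn ℝ (⊤ : ℕ∞) ψ V ∧
    MapsTo φ U V ∧ MapsTo ψ V U ∧
    (∀ y ∈ U, ψ (φ y) = y) ∧ (∀ z ∈ V, φ (ψ z) = z) ∧
    S ∩ U = U ∩ φ ⁻¹' (K : Set E)

/-!
Nearest-point projection is a smooth retraction of a neighbourhood of `N` onto `N`. Indeed, if `ρ`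
is a local smooth retraction near `p ∈ N`, which a chart provides, a point `y` of `N` nearest to `z`
solves `y - ρ y + (dρ_y)† (z - y) = 0`. At `(p, p)` the partial derivative in `y` is `1 - Q - Q†`
with `Q = dρ_p` idempotent, and this is injective, so the implicit function theorem applies.

The homotopy `H` is smooth on the closed set `t ∈ {0, 1}` or `x ∈ C`, where it is given by `f` and
`g`. A partition of unity glues these maps with constants elsewhere to a smooth map that equals `H`
on this set and is so close to `H` that it stays in the domain of the retraction; composing with
the retraction moves it back into `N`.
-/

open ContinuousLinearMap (adjoint)
open scoped ContDiff Manifold Topology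

section ImplicitFunction

variable {𝕜 : Type*} [RCLike 𝕜]
  {E₁ : Type*} [NormedAddCommGroup E₁] [NormedSpace 𝕜 E₁]
  {E₂ : Type*} [NormedAddCommGroup E₂] [NormedSpace 𝕜 E₂] [CompleteSpace E₂]
  {F : Type*} [NormedAddCommGroup F] [NormedSpace 𝕜 F]

theorem eventually_isInvertible_fderiv_comp_inr {G : E₁ × E₂ → F} {u : E₁ × E₂}
    (hG : ContDiffAt 𝕜 1 G u) (hG₂ : (fderiv 𝕜 G u ∘L .inr 𝕜 E₁ E₂).IsInvertible) :
    ∀ᶠ v in 𝓝 u, (fderiv 𝕜 G v ∘L .inr 𝕜 E₁ E₂).IsInvertible := by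
  obtain ⟨e, he⟩ := hG₂
  have hcont : ContinuousAt (fun v ↦ fderiv 𝕜 G v ∘L .inr 𝕜 E₁ E₂) u :=
    (hG.fderiv_right (m := 0) (by simp)).continuousAt.clm_comp continuousAt_const
  exact hcont.eventually_mem (he ▸ e.nhds)

variable [CompleteSpace E₁] [CompleteSpace F]

theorem exists_implicitFunction_eventually_contDiffAt {n : ℕ∞ω} (hn : n ≠ 0)
    {G : E₁ × E₂ → F} {u : E₁ × E₂} (hG : ∀ᶠ v in 𝓝 u, ContDiffAt 𝕜 n G v)
    (hG₂ : (fderiv 𝕜 G u ∘L .inr 𝕜 E₁ E₂).IsInvertible) :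
    ∃ ψ : E₁ → E₂, (∀ᶠ x in 𝓝 u.1, ContDiffAt 𝕜 n ψ x) ∧
      ∀ᶠ v in 𝓝 u, G v = G u ↔ ψ v.1 = v.2 := by
  have hGu := hG.self_of_nhds
  have one_le : 1 ≤ n := ENat.one_le_iff_ne_zero_withTop.2 hn
  let ψ := hGu.implicitFunction hn hG₂
  have hψu : ContDiffAt 𝕜 1 ψ u.1 := (hGu.contDiffAt_implicitFunction hn hG₂).of_le one_le
  have hgraph : Filter.Tendsto (fun x ↦ (x, ψ x)) (𝓝 u.1) (𝓝 u) :=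
    Filter.tendsto_id.prodMk_nhds <|
      hGu.implicitFunction_apply_self hn hG₂ ▸ hψu.continuousAt.tendsto
  -- `ContDiffAt 𝕜 ∞` at `u.1` does not spread to a neighbourhood, so `ψ` is compared at each
  -- nearby `x` with the implicit function based at `(x, ψ x)`.
  refine ⟨ψ, ?_, hGu.eventually_apply_eq_iff_implicitFunction hn hG₂⟩
  filter_upwards [hψu.eventually (by simp), hgraph.eventually hG,
    hgraph.eventually (eventually_isInvertible_fderiv_comp_inr (hGu.of_le one_le) hG₂),
    (hGu.eventually_apply_implicitFunction hn hG₂).eventually_nhds] with x hψx hGx hG₂x hzero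
  refine (hGx.contDiffAt_implicitFunction hn hG₂x).congr_of_eventuallyEq ?_
  filter_upwards [hzero, (continuousAt_id.prodMk hψx.continuousAt).eventually
    (hGx.eventually_apply_eq_iff_implicitFunction hn hG₂x)] with y hy hiff
  exact (hiff.1 (hy.trans hzero.self_of_nhds.symm)).symm

end ImplicitFunction

section Retraction

variable {E : Type*} [NormedAddCommGroup E] [NormedSpace ℝ E]

/-- `ρ` maps the open set `O` smoothly into `N` and fixes the points of `N` in `O`. It need not map
`O` into itself, so it is a retraction in the usual sense only if `N ⊆ O`. -/
structure IsSmoothRetractionOn (ρ : E → E) (O N : Set E) : Prop where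
  isOpen : IsOpen O
  contDiffOn : ContDiffOn ℝ ∞ ρ O
  mapsTo : MapsTo ρ O N
  eqOn : EqOn ρ id (N ∩ O)

/-- `N` is a smooth retract of one of its open neighbourhoods. -/
def IsSmoothNhdsRetract (N : Set E) : Prop :=
  ∃ O ρ, N ⊆ O ∧ IsSmoothRetractionOn ρ O N

/-- Every point of `N` has an open neighbourhood with a smooth retraction into `N`. -/
def IsLocalSmoothNhdsRetract (N : Set E) : Prop :=
  ∀ p ∈ N, ∃ O ρ, p ∈ O ∧ IsSmoothRetractionOn ρ O N

theorem IsSubmanifoldOfDim.isLocalSmoothNhdsRetract [FiniteDimensional ℝ E] {k : ℕ} {S : Set E}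
    (hS : IsSubmanifoldOfDim k S) : IsLocalSmoothNhdsRetract S := by
  intro p hp
  obtain ⟨U, V, φ, ψ, K, -, hU, hV, hpU, hφ, hψ, hφm, hψm, hl, hr, hSU⟩ := hS p hp
  obtain ⟨P, hP⟩ := Submodule.ClosedComplemented.of_finiteDimensional K
  have hPφ : ContDiffOn ℝ ∞ (fun y ↦ (P (φ y) : E)) U :=
    (K.subtypeL ∘L P).contDiff.comp_contDiffOn hφ
  have hPφ_eq : ∀ y ∈ S ∩ U, (P (φ y) : E) = φ y := fun y hy ↦
    congrArg Subtype.val (hP ⟨φ y, (hSU ▸ hy : y ∈ U ∩ φ ⁻¹' K).2⟩)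
  refine ⟨U ∩ (fun y ↦ (P (φ y) : E)) ⁻¹' V, fun y ↦ ψ (P (φ y)), ⟨hpU, ?_⟩, ?_⟩
  · rw [mem_preimage, hPφ_eq p ⟨hp, hpU⟩]
    exact hφm hpU
  · refine ⟨hPφ.continuousOn.isOpen_inter_preimage hU hV,
      hψ.comp (hPφ.mono inter_subset_left) fun y hy ↦ hy.2, fun y ⟨_, hy⟩ ↦ ?_,
      fun y ⟨hyS, hyU, _⟩ ↦ ?_⟩
    · have hmem : ψ (P (φ y)) ∈ U ∩ φ ⁻¹' K :=
        ⟨hψm hy, by rw [mem_preimage, hr _ hy]; exact (P (φ y)).2⟩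
      exact (hSU ▸ hmem : _ ∈ S ∩ U).1
    · simp only [hPφ_eq y ⟨hyS, hyU⟩, hl y hyU, id_eq]

theorem IsLocalSmoothNhdsRetract.isLocallyClosed {N : Set E} (hN : IsLocalSmoothNhdsRetract N) :
    IsLocallyClosed N := by
  refine ((isLocallyClosed_tfae N).out 0 2).2 fun p hp ↦ ?_
  obtain ⟨O, ρ, hpO, hρ⟩ := hN p hp
  have hfix : Subtype.val ⁻¹' N = {y : O | ρ y = y} := by
    ext y
    exact ⟨fun hy ↦ hρ.eqOn ⟨hy, y.2⟩, fun hy ↦ mem_preimage.2 (hy ▸ hρ.mapsTo y.2)⟩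
  refine ⟨O, hρ.isOpen.mem_nhds hpO, ?_⟩
  rw [hfix]
  exact isClosed_eq (continuousOn_iff_continuous_domRestrict.1 hρ.contDiffOn.continuousOn)
    continuous_subtype_val

namespace IsSmoothRetractionOn

variable {ρ : E → E} {O N : Set E} {p : E}

theorem contDiffAt (hρ : IsSmoothRetractionOn ρ O N) (hpO : p ∈ O) : ContDiffAt ℝ ∞ ρ p :=
  hρ.contDiffOn.contDiffAt (hρ.isOpen.mem_nhds hpO)

theorem hasFDerivAt (hρ : IsSmoothRetractionOn ρ O N) (hpO : p ∈ O) :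
    HasFDerivAt ρ (fderiv ℝ ρ p) p :=
  ((hρ.contDiffAt hpO).differentiableAt (by simp)).hasFDerivAt

theorem isIdempotentElem_fderiv (hρ : IsSmoothRetractionOn ρ O N) (hp : p ∈ N) (hpO : p ∈ O) :
    IsIdempotentElem (fderiv ℝ ρ p) := by
  have hρp : ρ p = p := hρ.eqOn ⟨hp, hpO⟩
  have hd := hρ.hasFDerivAt hpO
  have hcomp : HasFDerivAt (ρ ∘ ρ) (fderiv ℝ ρ p ∘L fderiv ℝ ρ p) p :=
    HasFDerivAt.comp p (by rwa [hρp]) hd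
  have hρρ : ρ =ᶠ[𝓝 p] ρ ∘ ρ := by
    filter_upwards [hd.continuousAt.eventually_mem (hρp.symm ▸ hρ.isOpen.mem_nhds hpO),
      hρ.isOpen.mem_nhds hpO] with y hρy hy
    exact (hρ.eqOn ⟨hρ.mapsTo hy, hρy⟩).symm
  exact (hcomp.congr_of_eventuallyEq hρρ).unique hd

end IsSmoothRetractionOn

end Retraction

section NearestPoint

variable {X : Type*} [PseudoMetricSpace X] {N : Set X} {p y z : X}

/-- `y` is a point of `N` at minimal distance from `z`. -/
def IsNearestPoint (N : Set X) (z y : X) : Prop :=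
  y ∈ N ∧ IsMinOn (dist z) N y

/-- A choice of a point of `N` nearest to `z`; an arbitrary point if there is none. -/
def nearestPoint [Nonempty X] (N : Set X) (z : X) : X :=
  Classical.epsilon (IsNearestPoint N z)

theorem IsNearestPoint.dist_le_two_mul (hy : IsNearestPoint N z y) (hp : p ∈ N) :
    dist y p ≤ 2 * dist z p :=
  calc
    dist y p ≤ dist z y + dist z p := dist_triangle_left y p z
    _ ≤ dist z p + dist z p := by gcongr; exact hy.2 hp
    _ = 2 * dist z p := (two_mul _).symm

theorem eventually_isNearestPoint_nearestPoint [ProperSpace X] [Nonempty X]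
    (hN : IsLocallyClosed N) (hp : p ∈ N) :
    ∀ᶠ z in 𝓝 p, IsNearestPoint N z (nearestPoint N z) := by
  obtain ⟨U, Z, hU, hZ, rfl⟩ := hN
  obtain ⟨ε, hε, hball⟩ := Metric.nhds_basis_closedBall.mem_iff.1 (hU.mem_nhds hp.1)
  have hcompact : IsCompact (Metric.closedBall p ε ∩ Z) :=
    (isCompact_closedBall p ε).inter_right hZ
  have hpball : p ∈ Metric.closedBall p ε := Metric.mem_closedBall_self hε.le
  filter_upwards [Metric.ball_mem_nhds p (half_pos hε)] with z hz
  obtain ⟨y, hy, hmin⟩ := hcompact.exists_isMinOn ⟨p, hpball, hp.2⟩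
    (continuous_const.dist continuous_id : Continuous (dist z)).continuousOn
  refine Classical.epsilon_spec (p := IsNearestPoint (U ∩ Z) z)
    ⟨y, ⟨hball hy.1, hy.2⟩, fun w hw ↦ ?_⟩
  by_cases hwε : w ∈ Metric.closedBall p ε
  · exact hmin ⟨hwε, hw.2⟩
  · have hzy : dist z y ≤ dist z p := hmin ⟨hpball, hp.2⟩
    have hwp : dist w p ≤ dist z w + dist z p := dist_triangle_left w p z
    rw [Metric.mem_closedBall, not_le] at hwε
    rw [Metric.mem_ball] at hz
    change dist z y ≤ dist z w
    linarith

theorem tendsto_nearestPoint [ProperSpace X] [Nonempty X] (hN : IsLocallyClosed N) (hp : p ∈ N) :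
    Filter.Tendsto (nearestPoint N) (𝓝 p) (𝓝 p) := by
  have hbound : Filter.Tendsto (fun z ↦ 2 * dist z p) (𝓝 p) (𝓝 0) := by
    simpa using ((continuous_id.dist continuous_const).const_mul 2).tendsto' p (2 * dist p p) rfl
  refine tendsto_iff_dist_tendsto_zero.2 (squeeze_zero' (.of_forall fun _ ↦ dist_nonneg) ?_ hbound)
  filter_upwards [eventually_isNearestPoint_nearestPoint hN hp] with z hz
  exact hz.dist_le_two_mul hp

end NearestPoint

theorem isInvertible_one_sub_sub_adjoint {𝕜 E : Type*} [RCLike 𝕜] [NormedAddCommGroup E]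
    [InnerProductSpace 𝕜 E] [FiniteDimensional 𝕜 E] [CompleteSpace E] {Q : E →L[𝕜] E}
    (hQ : IsIdempotentElem Q) : (1 - Q - adjoint Q).IsInvertible := by
  have hinj : Injective ⇑(1 - Q - adjoint Q) := by
    refine (injective_iff_map_eq_zero _).2 fun v hv ↦ ?_
    have hv_eq : v = Q v + adjoint Q v := by
      rw [← sub_eq_zero, ← sub_sub]
      exact hv
    have hQadj : Q (adjoint Q v) = 0 := by
      have := congrArg Q hv_eq
      rwa [map_add, ← mul_apply_eq_comp, hQ, left_eq_add] at this
    have hadj : adjoint Q v = 0 := by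
      rw [← inner_self_eq_zero (𝕜 := 𝕜), ContinuousLinearMap.adjoint_inner_left, hQadj,
        inner_zero_right]
    rw [hadj, add_zero] at hv_eq
    rw [← inner_self_eq_zero (𝕜 := 𝕜)]
    calc
      inner 𝕜 v v = inner 𝕜 v (Q v) := congrArg (inner 𝕜 v) hv_eq
      _ = inner 𝕜 (adjoint Q v) v := (Q.adjoint_inner_left v v).symm
      _ = 0 := by rw [hadj, inner_zero_left]
  exact ⟨(LinearEquiv.ofInjectiveEndo _ hinj).toContinuousLinearEquiv, rfl⟩

section Tubular

variable {E : Type*} [NormedAddCommGroup E] [InnerProductSpace ℝ E]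
  {ρ : E → E} {O N : Set E} {p y z : E}

section Defect

variable [CompleteSpace E]

/-- The map `(z, y) ↦ y - ρ y + (dρ_y)† (z - y)`, which vanishes if `y` is a point of `N` nearest
to `z` and `ρ` is a smooth retraction into `N` near `y`. The second summand is then half the
gradient of `-‖z - ρ w‖²` in `w` at `y`; the first one makes the equation nondegenerate in the
directions normal to `N`. -/
def nearestPointDefect (ρ : E → E) (q : E × E) : E :=
  q.2 - ρ q.2 + adjoint (fderiv ℝ ρ q.2) (q.1 - q.2)

namespace IsSmoothRetractionOn

theorem contDiffAt_adjoint_fderiv (hρ : IsSmoothRetractionOn ρ O N) (hy : y ∈ O) :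
    ContDiffAt ℝ ∞ (fun w ↦ adjoint (fderiv ℝ ρ w)) y :=
  (adjoint (𝕜 := ℝ) (E := E) (F := E)).toContinuousLinearEquiv.contDiff.contDiffAt.comp y
    ((hρ.contDiffAt hy).fderiv_right le_rfl)

theorem contDiffAt_nearestPointDefect (hρ : IsSmoothRetractionOn ρ O N) {q : E × E}
    (hq : q.2 ∈ O) : ContDiffAt ℝ ∞ (nearestPointDefect ρ) q :=
  (contDiffAt_snd.sub ((hρ.contDiffAt hq).comp q contDiffAt_snd)).add
    (((hρ.contDiffAt_adjoint_fderiv hq).comp q contDiffAt_snd).clm_apply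
      (contDiffAt_fst.sub contDiffAt_snd))

theorem fderiv_nearestPointDefect_comp_inr (hρ : IsSmoothRetractionOn ρ O N) (hpO : p ∈ O) :
    fderiv ℝ (nearestPointDefect ρ) (p, p) ∘L .inr ℝ E E =
      1 - fderiv ℝ ρ p - adjoint (fderiv ℝ ρ p) := by
  have hpartial : HasFDerivAt (fun y ↦ nearestPointDefect ρ (p, y))
      (fderiv ℝ (nearestPointDefect ρ) (p, p) ∘L .inr ℝ E E) p :=
    HasFDerivAt.comp p (((hρ.contDiffAt_nearestPointDefect (q := (p, p)) hpO).differentiableAt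
      (by simp)).hasFDerivAt) (hasFDerivAt_prodMk_right p p)
  refine hpartial.unique ?_
  have hadj := ((hρ.contDiffAt_adjoint_fderiv hpO).differentiableAt (by simp)).hasFDerivAt
  convert! ((hasFDerivAt_id p).sub (hρ.hasFDerivAt hpO)).add
    (hadj.clm_apply ((hasFDerivAt_id p).const_sub p)) using 1
  ext v
  simp [sub_eq_add_neg]

theorem nearestPointDefect_eq_zero (hρ : IsSmoothRetractionOn ρ O N) (hy : IsNearestPoint N z y)
    (hyO : y ∈ O) : nearestPointDefect ρ (z, y) = 0 := by
  have hρy : ρ y = y := hρ.eqOn ⟨hy.1, hyO⟩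
  have hmin : IsLocalMin (fun w ↦ ‖z - ρ w‖ ^ 2) y := by
    filter_upwards [hρ.isOpen.mem_nhds hyO] with w hw
    have hdist : dist z y ≤ dist z (ρ w) := hy.2 (hρ.mapsTo hw)
    rw [dist_eq_norm, dist_eq_norm] at hdist
    rw [hρy]
    gcongr
  have hcrit := hmin.hasFDerivAt_eq_zero ((hρ.hasFDerivAt hyO).const_sub z).norm_sq
  have hadj : adjoint (fderiv ℝ ρ y) (z - y) = 0 := by
    refine ext_inner_right ℝ fun v ↦ ?_
    have hv := DFunLike.congr_fun hcrit v
    rw [hρy] at hv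
    rw [ContinuousLinearMap.adjoint_inner_left, inner_zero_left]
    simpa [-map_sub] using hv
  simp only [nearestPointDefect, hρy, hadj, sub_self, add_zero]

end IsSmoothRetractionOn

end Defect

theorem IsSmoothRetractionOn.eventually_contDiffAt_nearestPoint [FiniteDimensional ℝ E]
    (hρ : IsSmoothRetractionOn ρ O N) (hN : IsLocallyClosed N) (hp : p ∈ N) (hpO : p ∈ O) :
    ∀ᶠ z in 𝓝 p, ContDiffAt ℝ ∞ (nearestPoint N) z := by
  have := FiniteDimensional.complete ℝ E
  have hdefect : ∀ᶠ q in 𝓝 (p, p), ContDiffAt ℝ ∞ (nearestPointDefect ρ) q :=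
    (continuousAt_snd.eventually_mem (hρ.isOpen.mem_nhds hpO)).mono fun _ ↦
      hρ.contDiffAt_nearestPointDefect
  have hinv : (fderiv ℝ (nearestPointDefect ρ) (p, p) ∘L .inr ℝ E E).IsInvertible := by
    rw [hρ.fderiv_nearestPointDefect_comp_inr hpO]
    exact isInvertible_one_sub_sub_adjoint (hρ.isIdempotentElem_fderiv hp hpO)
  obtain ⟨ψ, hψ, hψ_iff⟩ := exists_implicitFunction_eventually_contDiffAt (by simp) hdefect hinv
  have hpp : nearestPointDefect ρ (p, p) = 0 := by
    simp only [nearestPointDefect, hρ.eqOn ⟨hp, hpO⟩, id_eq, sub_self, map_zero, add_zero]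
  have htendsto := tendsto_nearestPoint hN hp
  have heq : nearestPoint N =ᶠ[𝓝 p] ψ := by
    filter_upwards [eventually_isNearestPoint_nearestPoint hN hp,
      htendsto.eventually_mem (hρ.isOpen.mem_nhds hpO),
      (Filter.tendsto_id.prodMk_nhds htendsto).eventually hψ_iff] with z hnear hmem hiff
    exact (hiff.1 ((hρ.nearestPointDefect_eq_zero hnear hmem).trans hpp.symm)).symm
  filter_upwards [hψ, heq.eventually_nhds] with z hψz heqz
  exact hψz.congr_of_eventuallyEq heqz

theorem IsLocalSmoothNhdsRetract.isSmoothNhdsRetract [FiniteDimensional ℝ E]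
    (hN : IsLocalSmoothNhdsRetract N) : IsSmoothNhdsRetract N := by
  let good : Set E := {z | ContDiffAt ℝ ∞ (nearestPoint N) z ∧
    IsNearestPoint N z (nearestPoint N z)}
  refine ⟨interior good, nearestPoint N, fun p hp ↦ ?_, isOpen_interior,
    fun z hz ↦ (interior_subset hz).1.contDiffWithinAt, fun z hz ↦ (interior_subset hz).2.1,
    fun y ⟨hy, hyO⟩ ↦ ?_⟩
  · obtain ⟨O, ρ, hpO, hρ⟩ := hN p hp
    exact mem_interior_iff_mem_nhds.2
      ((hρ.eventually_contDiffAt_nearestPoint hN.isLocallyClosed hp hpO).and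
        (eventually_isNearestPoint_nearestPoint hN.isLocallyClosed hp))
  · have hdist := (interior_subset hyO).2.dist_le_two_mul hy
    rw [dist_self, mul_zero] at hdist
    exact dist_le_zero.1 hdist

end Tubular

section Approximation

variable {E : Type*} [NormedAddCommGroup E] [NormedSpace ℝ E]
  {F : Type*} [NormedAddCommGroup F] [NormedSpace ℝ F] {S B : Set E} {h : E → F}

/-- Smoothness of a map on an arbitrary subset `S`: around each point of `S` there is a smooth map
on an open set agreeing with `h` on `S`. The values of `h` off `S` are irrelevant. -/
def HasLocalSmoothExtensions (h : E → F) (S : Set E) : Prop :=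
  ∀ x ∈ S, ∃ U ∈ 𝓝 x, ∃ c : E → F, ContDiffOn ℝ ∞ c U ∧ EqOn c h (U ∩ S)

theorem HasLocalSmoothExtensions.of_contDiffOn {V : Set E} (hV : IsOpen V) (hSV : S ⊆ V)
    (hh : ContDiffOn ℝ ∞ h V) : HasLocalSmoothExtensions h S :=
  fun _ hx ↦ ⟨V, hV.mem_nhds (hSV hx), h, hh, fun _ _ ↦ rfl⟩

theorem exists_contDiffOn_forall_mem_convex_of_local [FiniteDimensional ℝ E] {n : ℕ∞}
    {t : E → Set F} (ht : ∀ x ∈ S, Convex ℝ (t x))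
    (hloc : ∀ x ∈ S, ∃ U ∈ 𝓝 x, ∃ c : E → F, ContDiffOn ℝ n c U ∧ ∀ y ∈ U ∩ S, c y ∈ t y) :
    ∃ W, IsOpen W ∧ S ⊆ W ∧ ∃ k : E → F, ContDiffOn ℝ n k W ∧ ∀ x ∈ S, k x ∈ t x := by
  choose! U hU c hc hct using hloc
  let W : TopologicalSpace.Opens E := ⟨⋃ x ∈ S, interior (U x), isOpen_biUnion fun _ _ ↦
    isOpen_interior⟩
  have hSW : S ⊆ W := fun x hx ↦ mem_biUnion hx (mem_interior_iff_mem_nhds.2 (hU x hx))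
  have : LocallyCompactSpace W := W.isOpen.locallyCompactSpace
  obtain ⟨k, hk⟩ := exists_contMDiffMap_forall_mem_convex_of_local 𝓘(ℝ, E) (n := n) (M := W)
    (t := fun y ↦ {v | (y : E) ∈ S → v ∈ t y})
    (fun y v hv w hw a b ha hb hab hy ↦ ht y hy (hv hy) (hw hy) ha hb hab) fun y ↦ by
      obtain ⟨x, hx, hyx⟩ := mem_iUnion₂.1 y.2
      refine ⟨Subtype.val ⁻¹' interior (U x),
        (isOpen_interior.preimage continuous_subtype_val).mem_nhds hyx, fun w ↦ c x w,
        fun w hw ↦ ?_, fun w hw hwS ↦ hct x hx w ⟨interior_subset hw, hwS⟩⟩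
      exact (contMDiffAt_subtype_iff.2 ((hc x hx).contDiffAt
        (mem_interior_iff_mem_nhds.1 hw)).contMDiffAt).contMDiffWithinAt
  have hext : ∀ y : W, extend Subtype.val k 0 (y : E) = k y :=
    Subtype.val_injective.extend_apply k 0
  refine ⟨W, W.isOpen, hSW, extend Subtype.val k 0, fun y hy ↦ ?_, fun x hx ↦ ?_⟩
  · refine (contMDiffAt_iff_contDiffAt.1 ?_).contDiffWithinAt
    refine (contMDiffAt_subtype_iff (U := W) (x := ⟨y, hy⟩)).1 ?_
    simpa only [hext] using k.contMDiff.contMDiffAt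
  · rw [hext ⟨x, hSW hx⟩]
    exact hk ⟨x, hSW hx⟩ hx

theorem exists_contDiffOn_dist_lt_eqOn [FiniteDimensional ℝ E] {ε : E → ℝ} (hB : IsClosed B)
    (hh : ContinuousOn h S) (hε : ContinuousOn ε S) (ε_pos : ∀ x ∈ S, 0 < ε x)
    (hhB : HasLocalSmoothExtensions h (S ∩ B)) :
    ∃ W, IsOpen W ∧ S ⊆ W ∧ ∃ k : E → F, ContDiffOn ℝ ∞ k W ∧
      (∀ x ∈ S, dist (k x) (h x) < ε x) ∧ EqOn k h (S ∩ B) := by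
  have hlocal : ∀ x ∈ S, ∃ U ∈ 𝓝 x, ∃ c : E → F, ContDiffOn ℝ ∞ c U ∧ c x = h x ∧
      EqOn c h (U ∩ (S ∩ B)) := by
    intro x hx
    by_cases hxB : x ∈ B
    · obtain ⟨U, hU, c, hc, hch⟩ := hhB x ⟨hx, hxB⟩
      exact ⟨U, hU, c, hc, hch ⟨mem_of_mem_nhds hU, hx, hxB⟩, hch⟩
    · exact ⟨Bᶜ, hB.isOpen_compl.mem_nhds hxB, fun _ ↦ h x, contDiffOn_const, rfl,
        fun y hy ↦ absurd hy.2.2 hy.1⟩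
  obtain ⟨W, hW, hSW, k, hk, hkt⟩ := exists_contDiffOn_forall_mem_convex_of_local (n := ⊤)
    (t := fun x ↦ Metric.ball (h x) (ε x) ∩ {v | x ∈ B → v ∈ ({h x} : Set F)})
    (fun x _ ↦ (convex_ball _ _).inter (convex_singleton _).setOfPred_const_imp) fun x hx ↦ by
      obtain ⟨U, hU, c, hc, hcx, hch⟩ := hlocal x hx
      have hcont : ContinuousWithinAt (fun y ↦ dist (c y) (h y)) S x :=
        (hc.contDiffAt hU).continuousAt.continuousWithinAt.dist (hh x hx)
      have hlt : ∀ᶠ y in 𝓝[S] x, dist (c y) (h y) < ε y :=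
        hcont.eventually_lt (hε x hx) (by simpa only [hcx, dist_self] using ε_pos x hx)
      exact ⟨_, Filter.inter_mem hU (eventually_nhdsWithin_iff.1 hlt), c,
        hc.mono inter_subset_left, fun y ⟨⟨hyU, hy⟩, hyS⟩ ↦
          ⟨hy hyS, fun hyB ↦ hch ⟨hyU, hyS, hyB⟩⟩⟩
  exact ⟨W, hW, hSW, k, hk, fun x hx ↦ (hkt x hx).1, fun x hx ↦ (hkt x hx.1).2 hx.2⟩

theorem exists_continuous_pos_ball_subset {X : Type*} [PseudoMetricSpace X] {Ω : Set X}
    (hΩ : IsOpen Ω) :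
    ∃ δ : X → ℝ, Continuous δ ∧ ∀ y ∈ Ω, 0 < δ y ∧ Metric.ball y (δ y) ⊆ Ω := by
  rcases Ωᶜ.eq_empty_or_nonempty with hempty | hne
  · exact ⟨fun _ ↦ 1, continuous_const, fun y _ ↦
      ⟨one_pos, by simp only [compl_empty_iff.1 hempty, subset_univ]⟩⟩
  · exact ⟨fun y ↦ Metric.infDist y Ωᶜ, Metric.continuous_infDist_pt _, fun y hy ↦
      ⟨(hΩ.isClosed_compl.notMem_iff_infDist_pos hne).1 (notMem_compl_iff.2 hy),
        Metric.ball_infDist_compl_subset⟩⟩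

theorem IsSmoothNhdsRetract.exists_contDiffOn_mapsTo_eqOn [FiniteDimensional ℝ E] {N : Set F}
    (hN : IsSmoothNhdsRetract N) (hB : IsClosed B) (hh : ContinuousOn h S) (hhN : MapsTo h S N)
    (hhB : HasLocalSmoothExtensions h (S ∩ B)) :
    ∃ W, IsOpen W ∧ S ⊆ W ∧ ∃ k : E → F, ContDiffOn ℝ ∞ k W ∧ MapsTo k S N ∧
      EqOn k h (S ∩ B) := by
  obtain ⟨Ω, ρ, hNΩ, hρ⟩ := hN
  obtain ⟨δ, hδ, hδΩ⟩ := exists_continuous_pos_ball_subset hρ.isOpen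
  obtain ⟨W, hW, hSW, k, hk, hkh, hkB⟩ := exists_contDiffOn_dist_lt_eqOn hB hh
    (hδ.comp_continuousOn hh) (fun x hx ↦ (hδΩ _ (hNΩ (hhN hx))).1) hhB
  have hkΩ : MapsTo k S Ω := fun x hx ↦ (hδΩ _ (hNΩ (hhN hx))).2 (hkh x hx)
  refine ⟨W ∩ k ⁻¹' Ω, hk.continuousOn.isOpen_inter_preimage hW hρ.isOpen,
    fun x hx ↦ ⟨hSW hx, hkΩ hx⟩, ρ ∘ k,
    hρ.contDiffOn.comp (hk.mono inter_subset_left) inter_subset_right,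
    hρ.mapsTo.comp hkΩ, fun x hx ↦ ?_⟩
  rw [comp_apply, hkB hx]
  exact hρ.eqOn ⟨hhN hx.1, hNΩ (hhN hx.1)⟩

end Approximation

section Homotopy

variable {E : Type*} [NormedAddCommGroup E] [NormedSpace ℝ E]
  {F : Type*} [NormedAddCommGroup F] [NormedSpace ℝ F]
  {M C : Set E} {N : Set F} {f g : E → F} {H : E × ℝ → F}

theorem hasLocalSmoothExtensions_of_homotopy_rel (hf : HasLocalSmoothExtensions f M)
    (hg : HasLocalSmoothExtensions g M) (hH0 : ∀ x ∈ M, H (x, 0) = f x)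
    (hH1 : ∀ x ∈ M, H (x, 1) = g x) (hHC : ∀ x ∈ M ∩ C, ∀ t ∈ Icc (0 : ℝ) 1, H (x, t) = f x) :
    HasLocalSmoothExtensions H (M ×ˢ Icc 0 1 ∩ (univ ×ˢ {0, 1} ∪ C ×ˢ univ)) := by
  have hHg : ∀ x ∈ M ∩ C, ∀ t ∈ Icc (0 : ℝ) 1, H (x, t) = g x := fun x hx t ht ↦ by
    rw [hHC x hx t ht, ← hH1 x hx.1, hHC x hx 1 (right_mem_Icc.2 zero_le_one)]
  rintro ⟨x, t⟩ ⟨⟨hx, -⟩, -⟩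
  rcases lt_or_ge t 1 with ht1 | ht1
  · obtain ⟨U, hU, c, hc, hcf⟩ := hf x hx
    refine ⟨U ×ˢ Iio 1, prod_mem_nhds hU (Iio_mem_nhds ht1), c ∘ Prod.fst,
      hc.comp contDiffOn_fst fun q hq ↦ hq.1, ?_⟩
    rintro ⟨y, s⟩ ⟨⟨hyU, hs1⟩, ⟨hy, hs⟩, ⟨-, rfl | rfl⟩ | ⟨hyC, -⟩⟩
    · exact (hcf ⟨hyU, hy⟩).trans (hH0 y hy).symm
    · exact (lt_irrefl (1 : ℝ) hs1).elim
    · exact (hcf ⟨hyU, hy⟩).trans (hHC y ⟨hy, hyC⟩ s hs).symm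
  · obtain ⟨U, hU, c, hc, hcg⟩ := hg x hx
    refine ⟨U ×ˢ Ioi 0, prod_mem_nhds hU (Ioi_mem_nhds (one_pos.trans_le ht1)), c ∘ Prod.fst,
      hc.comp contDiffOn_fst fun q hq ↦ hq.1, ?_⟩
    rintro ⟨y, s⟩ ⟨⟨hyU, hs0⟩, ⟨hy, hs⟩, ⟨-, rfl | rfl⟩ | ⟨hyC, -⟩⟩
    · exact (lt_irrefl (0 : ℝ) hs0).elim
    · exact (hcg ⟨hyU, hy⟩).trans (hH1 y hy).symm
    · exact (hcg ⟨hyU, hy⟩).trans (hHg y ⟨hy, hyC⟩ s hs).symm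

theorem smooth_homotopy_of_homotopy_general [FiniteDimensional ℝ E] (hN : IsSmoothNhdsRetract N)
    (hf : HasLocalSmoothExtensions f M) (hg : HasLocalSmoothExtensions g M) (hC : IsClosed C)
    (hH : ContinuousOn H (M ×ˢ Icc 0 1)) (hHN : MapsTo H (M ×ˢ Icc 0 1) N)
    (hH0 : ∀ x ∈ M, H (x, 0) = f x) (hH1 : ∀ x ∈ M, H (x, 1) = g x)
    (hHC : ∀ x ∈ M ∩ C, ∀ t ∈ Icc (0 : ℝ) 1, H (x, t) = f x) :
    ∃ K : E × ℝ → F,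
      (∃ W : Set (E × ℝ), IsOpen W ∧ M ×ˢ Icc 0 1 ⊆ W ∧ ContDiffOn ℝ ∞ K W) ∧
      MapsTo K (M ×ˢ Icc 0 1) N ∧
      (∀ x ∈ M, K (x, 0) = f x) ∧ (∀ x ∈ M, K (x, 1) = g x) ∧
      (∀ x ∈ M ∩ C, ∀ t ∈ Icc (0 : ℝ) 1, K (x, t) = f x) := by
  have hB : IsClosed (univ ×ˢ {0, 1} ∪ C ×ˢ univ : Set (E × ℝ)) :=
    (isClosed_univ.prod (toFinite _).isClosed).union (hC.prod isClosed_univ)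
  obtain ⟨W, hW, hMW, K, hK, hKN, hKH⟩ := hN.exists_contDiffOn_mapsTo_eqOn hB hH hHN
    (hasLocalSmoothExtensions_of_homotopy_rel hf hg hH0 hH1 hHC)
  refine ⟨K, ⟨W, hW, hMW, hK⟩, hKN, fun x hx ↦ ?_, fun x hx ↦ ?_, fun x hx t ht ↦ ?_⟩
  · exact (@hKH (x, 0) ⟨⟨hx, left_mem_Icc.2 zero_le_one⟩, .inl ⟨mem_univ x, .inl rfl⟩⟩).trans
      (hH0 x hx)
  · exact (@hKH (x, 1) ⟨⟨hx, right_mem_Icc.2 zero_le_one⟩, .inl ⟨mem_univ x, .inr rfl⟩⟩).trans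
      (hH1 x hx)
  · exact (@hKH (x, t) ⟨⟨hx.1, ht⟩, .inr ⟨hx.2, mem_univ t⟩⟩).trans (hHC x hx t ht)

end Homotopy

/-- Homotopic smooth maps are smoothly homotopic; if the (continuous) homotopy is relative
to a closed subset `A ⊂ M`, then a smooth homotopy relative to `A` exists. -/
theorem smooth_homotopy_of_homotopy (a b m dN : ℕ) (M : Set (Euc a)) (N : Set (Euc b))
    (hM : IsSubmanifoldOfDim m M) (hN : IsSubmanifoldOfDim dN N)
    (f g : Euc a → Euc b)
    (Vf : Set (Euc a)) (hVf : IsOpen Vf) (hMVf : M ⊆ Vf) (hf : ContDiffOn ℝ (⊤ : ℕ∞) f Vf)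
    (Vg : Set (Euc a)) (hVg : IsOpen Vg) (hMVg : M ⊆ Vg) (hg : ContDiffOn ℝ (⊤ : ℕ∞) g Vg)
    (hfmaps : MapsTo f M N) (hgmaps : MapsTo g M N)
    (A C : Set (Euc a)) (hC : IsClosed C) (hA : A = M ∩ C)
    -- a continuous homotopy from f to g, relative to A
    (H : Euc a × ℝ → Euc b) (hH : ContinuousOn H (M ×ˢ Icc (0:ℝ) 1))
    (hHmaps : MapsTo H (M ×ˢ Icc (0:ℝ) 1) N)
    (hH0 : ∀ x ∈ M, H (x, 0) = f x) (hH1 : ∀ x ∈ M, H (x, 1) = g x)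
    (hHA : ∀ x ∈ A, ∀ t ∈ Icc (0:ℝ) 1, H (x, t) = f x) :
    -- then there is a smooth homotopy from f to g, relative to A
    ∃ K : Euc a × ℝ → Euc b,
      (∃ W : Set (Euc a × ℝ), IsOpen W ∧ M ×ˢ Icc (0:ℝ) 1 ⊆ W ∧
        ContDiffOn ℝ (⊤ : ℕ∞) K W) ∧
      MapsTo K (M ×ˢ Icc (0:ℝ) 1) N ∧
      (∀ x ∈ M, K (x, 0) = f x) ∧ (∀ x ∈ M, K (x, 1) = g x) ∧
      (∀ x ∈ A, ∀ t ∈ Icc (0:ℝ) 1, K (x, t) = f x) := by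
  subst hA
  exact smooth_homotopy_of_homotopy_general hN.isLocalSmoothNhdsRetract.isSmoothNhdsRetract
    (.of_contDiffOn hVf hMVf hf) (.of_contDiffOn hVg hMVg hg) hC hH hHmaps hH0 hH1 hHA
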